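/- arXiv:2110.02647 — 2 statements merged into one kernel-verified Lean document; each statement's English description precedes it below -/
import Mathlib

section
/- Let the sequence of PMFs (π_g) on X be defined by π_0 a given positive PMF and π_{g+1}(x) = π_g(x)^α e^{−λ q(x)} / Σ_y π_g(y)^α e^{−λ q(y)}. Then for every g ≥ 0 and x ∈ X, π_g(x) = π_0(x)^{α^g} · exp(−λ · (1−α^g)/(1−α) · q(x)) / Z_g, where Z_g = Σ_y π_0(y)^{α^g} exp(−λ (1−α^g)/(1−α) q(y)). -/
open Finset

/-!
One update tempers the current belief, `p ↦ p ^ α * exp (-λ q)`, and then normalizes. Tempering by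
`(s, t)`, `p ↦ p ^ s * exp (-t q)`, sends a rescaled weight to a rescaled weight, so all
normalizations but the last can be skipped; and tempering by `(s, t)` then `(s', t')` is tempering
by `(s * s', t * s' + t')`. Hence `g` updates amount to a single tempering by
`(α ^ g, λ * ∑ i < g, α ^ i)`, normalized once.
-/

theorem geom_sum_eq_one_sub_div {K : Type*} [DivisionRing K] {x : K} (hx : x ≠ 1) (n : ℕ) :
    ∑ i ∈ range n, x ^ i = (1 - x ^ n) / (1 - x) :=
  eq_div_of_mul_eq (sub_ne_zero.2 hx.symm) (geom_sum_mul_neg x n)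

section NormalizedWeight

variable {X K : Type*} [Fintype X] [Semifield K]

/-- The weight `w` rescaled to total mass one, the proportionality sign `∝` of the recursion.
A weight of total mass zero is sent to `0`, since division by zero gives zero. -/
def normalizedWeight (w : X → K) : X → K :=
  fun x ↦ w x / ∑ y, w y

theorem normalizedWeight_eq_smul (w : X → K) : normalizedWeight w = (∑ y, w y)⁻¹ • w :=
  funext fun x ↦ div_eq_inv_mul (w x) _

theorem normalizedWeight_of_sum_eq_one {w : X → K} (hw : ∑ x, w x = 1) :
    normalizedWeight w = w := by
  rw [normalizedWeight_eq_smul, hw, inv_one, one_smul]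

theorem normalizedWeight_smul {c : K} (hc : c ≠ 0) (w : X → K) :
    normalizedWeight (c • w) = normalizedWeight w := by
  funext x
  simp only [normalizedWeight, Pi.smul_apply, smul_eq_mul, ← mul_sum]
  exact mul_div_mul_left _ _ hc

end NormalizedWeight

section TemperedWeight

variable {X : Type*} {p : X → ℝ}

/-- The weight `p ^ s * exp (-t q)`: the belief `p` tempered with exponent `s` and reweighted by the
Gibbs factor of the cost `q` at inverse temperature `t`. -/
noncomputable def temperedWeight (p q : X → ℝ) (s t : ℝ) : X → ℝ :=
  fun x ↦ p x ^ s * Real.exp (-(t * q x))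

theorem temperedWeight_one_zero (p q : X → ℝ) : temperedWeight p q 1 0 = p := by
  funext x
  simp [temperedWeight]

theorem temperedWeight_nonneg (hp : 0 ≤ p) (q : X → ℝ) (s t : ℝ) : 0 ≤ temperedWeight p q s t :=
  fun x ↦ mul_nonneg (Real.rpow_nonneg (hp x) s) (Real.exp_pos _).le

theorem temperedWeight_smul {c : ℝ} (hc : 0 ≤ c) (hp : 0 ≤ p) (q : X → ℝ) (s t : ℝ) :
    temperedWeight (c • p) q s t = c ^ s • temperedWeight p q s t := by
  funext x
  simp only [temperedWeight, Pi.smul_apply, smul_eq_mul]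
  rw [Real.mul_rpow hc (hp x), mul_assoc]

theorem temperedWeight_temperedWeight (hp : 0 ≤ p) (q : X → ℝ) (s t s' t' : ℝ) :
    temperedWeight (temperedWeight p q s t) q s' t' =
      temperedWeight p q (s * s') (t * s' + t') := by
  funext x
  calc (p x ^ s * Real.exp (-(t * q x))) ^ s' * Real.exp (-(t' * q x))
      = p x ^ (s * s') * (Real.exp (-(t * q x) * s') * Real.exp (-(t' * q x))) := by
        rw [Real.mul_rpow (Real.rpow_nonneg (hp x) s) (Real.exp_pos _).le,
          ← Real.rpow_mul (hp x), ← Real.exp_mul, mul_assoc]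
    _ = p x ^ (s * s') * Real.exp (-((t * s' + t') * q x)) := by
        rw [← Real.exp_add]
        ring_nf

theorem normalizedWeight_temperedWeight_normalizedWeight [Fintype X] (hp : 0 ≤ p) (q : X → ℝ)
    (s t : ℝ) :
    normalizedWeight (temperedWeight (normalizedWeight p) q s t) =
      normalizedWeight (temperedWeight p q s t) := by
  rcases (Fintype.sum_nonneg hp).eq_or_lt with mass_zero | mass_pos
  · have p_zero : p = 0 := (Fintype.sum_eq_zero_iff_of_nonneg hp).1 mass_zero.symm
    rw [normalizedWeight_eq_smul p, p_zero, smul_zero]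
  · have inv_mass_pos : 0 < (∑ x, p x)⁻¹ := inv_pos.2 mass_pos
    rw [normalizedWeight_eq_smul p, temperedWeight_smul inv_mass_pos.le hp,
      normalizedWeight_smul (Real.rpow_pos_of_pos inv_mass_pos s).ne']

end TemperedWeight

-- If `α < 0`, the zeros of `π 0` are subject to the convention `0 ^ α = 0`.
theorem belief_update_explicit_form_general {X : Type*} [Fintype X] (q : X → ℝ) (lam α : ℝ)
    (π : ℕ → X → ℝ) (hπ₀nonneg : ∀ x, 0 ≤ π 0 x) (hπ₀sum : ∑ x, π 0 x = 1)
    (hrec : ∀ g x, π (g + 1) x =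
      π g x ^ α * Real.exp (-(lam * q x)) / ∑ y, π g y ^ α * Real.exp (-(lam * q y))) :
    ∀ g x, π g x =
      π 0 x ^ (α ^ g) * Real.exp (-(lam * (∑ i ∈ range g, α ^ i) * q x)) /
        ∑ y, π 0 y ^ (α ^ g) * Real.exp (-(lam * (∑ i ∈ range g, α ^ i) * q y)) := by
  suffices explicit : ∀ g, π g =
      normalizedWeight (temperedWeight (π 0) q (α ^ g) (lam * ∑ i ∈ range g, α ^ i)) from
    fun g ↦ congrFun (explicit g)
  have update : ∀ g, π (g + 1) = normalizedWeight (temperedWeight (π g) q α lam) :=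
    fun g ↦ funext (hrec g)
  intro g
  induction g with
  | zero =>
    rw [pow_zero, range_zero, sum_empty, mul_zero, temperedWeight_one_zero,
      normalizedWeight_of_sum_eq_one hπ₀sum]
  | succ g ih =>
    have rate_succ : lam * ∑ i ∈ range (g + 1), α ^ i =
        lam * (∑ i ∈ range g, α ^ i) * α + lam := by
      rw [geom_sum_succ]
      ring
    rw [update, ih, normalizedWeight_temperedWeight_normalizedWeight
      (temperedWeight_nonneg hπ₀nonneg _ _ _), temperedWeight_temperedWeight hπ₀nonneg,
      ← pow_succ, rate_succ]

/-- Explicit form of the belief-update recursion `π_{g+1} ∝ π_g^α e^(-λ q)`: the iterates are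
`π_g(x) = π_0(x)^(α^g) exp(-λ (1-α^g)/(1-α) q(x)) / Z_g`. -/
theorem belief_update_explicit_form
    {X : Type*} [Fintype X] [Nonempty X]
    (q : X → ℝ) (lam α : ℝ) (hlam : 0 < lam) (hα₀ : 0 < α) (hα₁ : α < 1)
    (π : ℕ → X → ℝ)
    (hπ₀pos : ∀ x, 0 < π 0 x) (hπ₀sum : ∑ x, π 0 x = 1)
    (hrec : ∀ g x, π (g + 1) x =
      π g x ^ α * Real.exp (-(lam * q x)) / ∑ y, π g y ^ α * Real.exp (-(lam * q y))) :
    ∀ g x, π g x =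
      π 0 x ^ (α ^ g) * Real.exp (-(lam * ((1 - α ^ g) / (1 - α)) * q x)) /
        ∑ y, π 0 y ^ (α ^ g) * Real.exp (-(lam * ((1 - α ^ g) / (1 - α)) * q y)) := by
  simpa only [geom_sum_eq_one_sub_div hα₁.ne] using
    belief_update_explicit_form_general q lam α π (fun x ↦ (hπ₀pos x).le) hπ₀sum hrec
end

section
/- Let π'_n be the posterior policies π'_n(s)(a) = ρ_n(s)(a) e^{−(λ r_n(s,a)+(1−α) log ρ_n(s)(a))} Z_{n+1}(f_n(s,a)) / Z_n(s), with Z_n given by the backward recursion Z_N(s) = e^{−λ r_N(s)}, Z_n(s) = Σ_a ρ_n(s)(a)^α e^{−λ r_n(s,a)} Z_{n+1}(f_n(s,a)). Then for every state s and every action sequence (a_n, …, a_{N−1}), with s_n = s and s_{k+1} = f_k(s_k, a_k), the telescoping identity Π_{k=n}^{N−1} π'_k(s_k)(a_k) = (Π_{k=n}^{N−1} ρ_k(s_k)(a_k)) · exp(−R_n) / Z_n(s) holds, where R_n = λ r_N(s_N) + Σ_{k=n}^{N−1} [λ r_k(s_k,a_k) + (1−α) log ρ_k(s_k)(a_k)].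 -/
open Finset

/-- The probability of the action sequence `as` under the (time-indexed) stochastic policy `p`,
along the deterministic rollout of the dynamics `f` started at time `n` in state `s`. -/
def pathProb {S A : Type*} (p : ℕ → S → A → ℝ) (f : ℕ → S → A → S) :
    ℕ → S → List A → ℝ
  | _, _, [] => 1
  | n, s, a :: as => p n s a * pathProb p f (n + 1) (f n s a) as

/-- The accumulated cost of the action sequence `as` for running costs `c` and terminal cost `cT`,
along the deterministic rollout of the dynamics `f` started at time `n` in state `s`. -/
def totalCost {S A : Type*} (f : ℕ → S → A → S) (c : ℕ → S → A → ℝ) (cT : S → ℝ) :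
    ℕ → S → List A → ℝ
  | _, s, [] => cT s
  | n, s, a :: as => c n s a + totalCost f c cT (n + 1) (f n s a) as

/-!
Under deterministic dynamics a path probability is multiplicative in the policy, and the posterior
policy is the pointwise product of three factors: the prior, the exponentiated running cost, and
the ratio `Z (k + 1) s_{k+1} / Z k s_k`. Along a path the ratios telescope to `Z N s_N / Z n s_n`,
and `Z N s_N` is the exponentiated terminal cost missing from the second factor.
-/

section PathProb

variable {S A : Type*} (f : ℕ → S → A → S)

/-- The state `s_{n + l.length}` reached from state `s` at time `n` by playing the action
sequence `l`, at which the terminal cost of a path is evaluated. -/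
def finalState : ℕ → S → List A → S
  | _, s, [] => s
  | n, s, a :: l => finalState (n + 1) (f n s a) l

theorem pathProb_mul (p q : ℕ → S → A → ℝ) (n : ℕ) (s : S) (l : List A) :
    pathProb (fun k t a => p k t a * q k t a) f n s l =
      pathProb p f n s l * pathProb q f n s l := by
  induction l generalizing n s with
  | nil => simp only [pathProb, mul_one]
  | cons a l ih => simp only [pathProb, ih, mul_mul_mul_comm]

theorem pathProb_exp_neg_mul_exp_neg_finalState (c : ℕ → S → A → ℝ) (cT : S → ℝ)
    (n : ℕ) (s : S) (l : List A) :
    pathProb (fun k t a => Real.exp (-c k t a)) f n s l * Real.exp (-cT (finalState f n s l)) =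
      Real.exp (-totalCost f c cT n s l) := by
  induction l generalizing n s with
  | nil => simp only [pathProb, finalState, totalCost, one_mul]
  | cons a l ih => simp only [pathProb, finalState, totalCost, mul_assoc, ih, neg_add, Real.exp_add]

variable {f} in
theorem pathProb_div_eq_finalState_div {h : ℕ → S → ℝ} {N : ℕ}
    (h_ne : ∀ k ≤ N, ∀ t, h k t ≠ 0) {n : ℕ} {l : List A} (hl : n + l.length = N) (s : S) :
    pathProb (fun k t a => h (k + 1) (f k t a) / h k t) f n s l =
      h N (finalState f n s l) / h n s := by
  induction l generalizing n s with
  | nil =>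
    obtain rfl : n = N := hl
    exact (div_self (h_ne n le_rfl s)).symm
  | cons a l ih =>
    have hl' : n + 1 + l.length = N := by rw [← hl, List.length_cons]; ring
    simp only [pathProb, finalState, ih hl']
    exact div_mul_div_cancel₀' (h_ne (n + 1) (by omega) _) _ _

end PathProb

theorem pos_of_backward_recursion {S A : Type*} [Fintype A] [Nonempty A] {N : ℕ}
    {f : ℕ → S → A → S} {w : ℕ → S → A → ℝ} {Z : ℕ → S → ℝ}
    (hw : ∀ n < N, ∀ s a, 0 < w n s a) (hZN : ∀ s, 0 < Z N s)
    (hZ : ∀ n < N, ∀ s, Z n s = ∑ a, w n s a * Z (n + 1) (f n s a))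
    {n : ℕ} (hn : n ≤ N) (s : S) : 0 < Z n s := by
  induction hn using Nat.decreasingInduction generalizing s with
  | self => exact hZN s
  | of_succ k hk ih =>
    rw [hZ k hk s]
    exact sum_pos (fun a _ => mul_pos (hw k hk s a) (ih (f k s a))) univ_nonempty

theorem posterior_path_distribution_telescopes_general {S A : Type*} {N : ℕ}
    {f : ℕ → S → A → S} {c : ℕ → S → A → ℝ} {cT : S → ℝ} {ρ π' : ℕ → S → A → ℝ} {Z : ℕ → S → ℝ}
    (Z_ne : ∀ k ≤ N, ∀ t, Z k t ≠ 0) (hZN : ∀ t, Z N t = Real.exp (-cT t))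
    (hπ' : ∀ k t a, π' k t a = ρ k t a * Real.exp (-c k t a) * Z (k + 1) (f k t a) / Z k t)
    {n : ℕ} {l : List A} (hl : n + l.length = N) (s : S) :
    pathProb π' f n s l =
      pathProb ρ f n s l * Real.exp (-totalCost f c cT n s l) / Z n s := by
  have hπ'_factor : π' = fun k t a =>
      ρ k t a * Real.exp (-c k t a) * (Z (k + 1) (f k t a) / Z k t) := by
    ext k t a
    rw [hπ', mul_div_assoc]
  calc pathProb π' f n s l
      = pathProb ρ f n s l * pathProb (fun k t a => Real.exp (-c k t a)) f n s l *
          (Z N (finalState f n s l) / Z n s) := by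
        rw [hπ'_factor, pathProb_mul, pathProb_mul, pathProb_div_eq_finalState_div Z_ne hl]
    _ = pathProb ρ f n s l * (pathProb (fun k t a => Real.exp (-c k t a)) f n s l *
          Real.exp (-cT (finalState f n s l))) / Z n s := by
        rw [hZN, mul_div_assoc', mul_assoc]
    _ = pathProb ρ f n s l * Real.exp (-totalCost f c cT n s l) / Z n s := by
        rw [pathProb_exp_neg_mul_exp_neg_finalState]

/-- The final claim of the paper's Corollary 1: the posterior path distribution is the
exponentially reweighted prior path distribution. For every state `s` and action sequence
`(a_n, …, a_{N-1})`, `Π π'_k(s_k)(a_k) = (Π ρ_k(s_k)(a_k)) · exp(-R_n) / Z_n(s)`, where `R_n`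
accumulates `λ r_k(s_k,a_k) + (1-α) log ρ_k(s_k)(a_k)` plus the terminal cost `λ r_N(s_N)`. -/
theorem posterior_path_distribution_telescopes
    {S : Type*} {A : Type*} [Fintype A] [Nonempty A]
    (N : ℕ) (hN : 1 ≤ N)
    (f : ℕ → S → A → S) (r : ℕ → S → A → ℝ) (rT : S → ℝ)
    (lam α : ℝ) (hlam : 0 < lam) (hα₀ : 0 < α) (hα₁ : α < 1)
    (ρ : ℕ → S → A → ℝ) (hρpos : ∀ n s a, 0 < ρ n s a) (hρsum : ∀ n s, ∑ a, ρ n s a = 1)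
    (Z : ℕ → S → ℝ)
    (hZN : ∀ s, Z N s = Real.exp (-(lam * rT s)))
    (hZ : ∀ n, n < N → ∀ s, Z n s =
      ∑ a, ρ n s a ^ α * Real.exp (-(lam * r n s a)) * Z (n + 1) (f n s a))
    (π' : ℕ → S → A → ℝ)
    (hπ' : ∀ n s a, π' n s a =
      ρ n s a * Real.exp (-(lam * r n s a + (1 - α) * Real.log (ρ n s a)))
        * Z (n + 1) (f n s a) / Z n s) :
    ∀ n, n ≤ N → ∀ s, ∀ as : Fin (N - n) → A,
      pathProb π' f n s (List.ofFn as) =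
        pathProb ρ f n s (List.ofFn as) *
          Real.exp (-(totalCost f
            (fun k t a => lam * r k t a + (1 - α) * Real.log (ρ k t a))
            (fun t => lam * rT t) n s (List.ofFn as))) / Z n s := by
  have Z_pos : ∀ k ≤ N, ∀ t, 0 < Z k t := fun k hk t =>
    pos_of_backward_recursion
      (fun k _ t a => mul_pos (Real.rpow_pos_of_pos (hρpos k t a) α) (Real.exp_pos _))
      (fun t => hZN t ▸ Real.exp_pos _) hZ hk t
  intro n hn s as
  exact posterior_path_distribution_telescopes_general (fun k hk t => (Z_pos k hk t).ne') hZN hπ'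
    (by rw [List.length_ofFn, Nat.add_sub_cancel' hn]) s
end
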